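/- Let G be a simple graph on n vertices and m edges with Laplacian eigenvalues μ₁ ≥ … ≥ μₙ, let 2 ≤ k ≤ n, and set t = μ₁/n. Then Σ_{i=2}^{k} μᵢ ≤ √((k − 1)·(μ₂² + … + μ_k²)) ≤ √((k − 1)·((2M₁(G) + 4m + n²)/2 − (1 − 2t(1 − t))·n²/2)), where M₁(G) is the first Zagreb index of G. -/

import Mathlib

/-!
The first inequality is Cauchy–Schwarz on the `k - 1` indices `2, …, k`.

For the second, the spectral theorem and the shape of the Laplacian `L = D - A` give
`∑ᵢ μᵢ² = tr L² = tr D² + tr A² = M₁(G) + 2m`, the cross terms `tr (D A)` vanishing because `A`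
has zero diagonal. On the other side, since `n t = μ₁`, the quantity under the right-hand root is
`(k - 1) (M₁(G) + 2m - μ₁² + n μ₁)`. As `μ₂² + … + μ_k² ≤ tr L² - μ₁²`, the bound
follows from `0 ≤ n μ₁`, which holds because `L` is positive semidefinite.
-/

/-- The squares of the eigenvalues of a real symmetric matrix sum to the trace of its square. -/
lemma sum_sq_eigenvalues_eq_trace {ι : Type*} [Fintype ι] [DecidableEq ι]
    {A : Matrix ι ι ℝ} (hA : A.IsHermitian) :
    ∑ i, hA.eigenvalues i ^ 2 = (A * A).trace := by
  set D : Matrix ι ι ℝ := Matrix.diagonal hA.eigenvalues with hD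
  have h : A = Unitary.conjStarAlgAut ℝ _ hA.eigenvectorUnitary D := hA.spectral_theorem
  have h2 : A * A = Unitary.conjStarAlgAut ℝ _ hA.eigenvectorUnitary (D * D) := by
    rw [map_mul, ← h]
  rw [h2, Unitary.conjStarAlgAut_apply, Matrix.trace_mul_cycle, Unitary.coe_star_mul_self,
    one_mul, hD, Matrix.diagonal_mul_diagonal, Matrix.trace_diagonal]
  exact Finset.sum_congr rfl fun i _ => sq _

lemma trace_lapMatrix_mul_self {V : Type*} [Fintype V] [DecidableEq V]
    (G : SimpleGraph V) [DecidableRel G.Adj] :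
    (G.lapMatrix ℝ * G.lapMatrix ℝ).trace
      = ∑ v, (G.degree v : ℝ) ^ 2 + 2 * (G.edgeFinset.card : ℝ) := by
  have hdeg : (2 * (G.edgeFinset.card : ℝ)) = ∑ v, (G.degree v : ℝ) := by
    exact_mod_cast G.sum_degrees_eq_twice_card_edges.symm
  rw [hdeg, ← Finset.sum_add_distrib, Matrix.trace]
  refine Finset.sum_congr rfl fun v _ => ?_
  rw [Matrix.diag_apply, SimpleGraph.lapMatrix, sub_mul, mul_sub, mul_sub]
  simp only [Matrix.sub_apply, SimpleGraph.adjMatrix_mul_self_apply_self,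
    SimpleGraph.degMatrix, Matrix.diagonal_mul_diagonal, Matrix.diagonal_mul,
    Matrix.mul_diagonal, Matrix.diagonal_apply_eq, SimpleGraph.adjMatrix_apply,
    SimpleGraph.irrefl, if_false]
  ring

/-- For a simple graph `G` on `n` vertices and `m` edges with Laplacian eigenvalues
`μ₁ ≥ … ≥ μₙ`, `2 ≤ k ≤ n`, and `t = μ₁/n`, one has the chain
`∑_{i=2}^{k} μᵢ ≤ √((k − 1)(μ₂² + … + μ_k²))
  ≤ √((k − 1)((2 M₁(G) + 4 m + n²)/2 − (1 − 2 t (1 − t)) n²/2))`,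
where `M₁(G) = ∑ᵥ deg(v)²` is the first Zagreb index. -/
theorem statement16 {n m k : ℕ} (G : SimpleGraph (Fin n)) [DecidableRel G.Adj]
    (hm : G.edgeFinset.card = m)
    (hL : (G.lapMatrix ℝ).IsHermitian)
    (μ : ℕ → ℝ)
    (hμeig : ∃ e : Fin n ≃ Fin n, ∀ j : Fin n, μ ((j : ℕ) + 1) = hL.eigenvalues (e j))
    (hμdec : ∀ i j : ℕ, 1 ≤ i → i ≤ j → j ≤ n → μ j ≤ μ i)
    (hk2 : 2 ≤ k) (hkn : k ≤ n)
    (t : ℝ) (ht : t = μ 1 / n) :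
    ∑ i ∈ Finset.Icc 2 k, μ i
      ≤ Real.sqrt (((k : ℝ) - 1) * ∑ i ∈ Finset.Icc 2 k, (μ i) ^ 2) ∧
    Real.sqrt (((k : ℝ) - 1) * ∑ i ∈ Finset.Icc 2 k, (μ i) ^ 2)
      ≤ Real.sqrt (((k : ℝ) - 1) *
          ((2 * (∑ v : Fin n, (G.degree v : ℝ) ^ 2) + 4 * m + n ^ 2) / 2
            - (1 - 2 * t * (1 - t)) * n ^ 2 / 2)) := by
  obtain ⟨e, he⟩ := hμeig
  have hn : 0 < n := by omega
  have hcard : (((Finset.Icc 2 k).card : ℕ) : ℝ) = (k : ℝ) - 1 := by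
    rw [Nat.card_Icc, show k + 1 - 2 = k - 1 by omega, Nat.cast_sub (by omega), Nat.cast_one]
  have hk1 : (0 : ℝ) ≤ (k : ℝ) - 1 := by rw [← hcard]; positivity
  refine ⟨?_, ?_⟩
  · apply Real.le_sqrt_of_sq_le
    rw [← hcard]
    exact sq_sum_le_card_mul_sum_sq
  · apply Real.sqrt_le_sqrt
    apply mul_le_mul_of_nonneg_left _ hk1
    have hμ1 : 0 ≤ μ 1 := by
      have h := he ⟨0, hn⟩
      simp only [zero_add] at h
      rw [h]
      exact hL.posSemidef_iff_eigenvalues_nonneg.1 (G.posSemidef_lapMatrix ℝ) _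
    have htot : ∑ i ∈ Finset.Icc 1 n, μ i ^ 2
        = ∑ v, (G.degree v : ℝ) ^ 2 + 2 * (m : ℝ) := by
      rw [← hm, ← trace_lapMatrix_mul_self, ← sum_sq_eigenvalues_eq_trace hL,
        ← Equiv.sum_comp e]
      simp only [← he]
      rw [Fin.sum_univ_eq_sum_range (fun j => μ (j + 1) ^ 2) n, Finset.range_eq_Ico,
        Finset.sum_Ico_add' (fun j => μ j ^ 2) 0 n 1]
      rfl
    have hpart : μ 1 ^ 2 + ∑ i ∈ Finset.Icc 2 k, μ i ^ 2 ≤ ∑ i ∈ Finset.Icc 1 n, μ i ^ 2 := by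
      rw [← Finset.add_sum_Ioc_eq_sum_Icc (by omega : 1 ≤ n)]
      gcongr
      intro i hi
      simp only [Finset.mem_Icc, Finset.mem_Ioc] at hi ⊢
      omega
    have hn0 : (n : ℝ) ≠ 0 := by positivity
    have htn : t * n = μ 1 := by rw [ht]; field_simp
    have hexp : (1 - 2 * t * (1 - t)) * (n : ℝ) ^ 2 / 2
        = (n : ℝ) ^ 2 / 2 - μ 1 * n + μ 1 ^ 2 := by
      rw [← htn]; ring
    have hnn : 0 ≤ μ 1 * n := by positivity
    rw [hexp]
    linarith
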